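/- Let U ∈ ℝ^{n×p}, β* ∈ ℝ^p, w ∈ ℝⁿ, y = Uβ* + w, and λ > 0. Let S ⊆ {1, …, p} contain the support of β*, with |S| = s ≥ 1, let β̂ ∈ ℝ^p, and set θ = β̂ − β*. Suppose: (a) there exists κ ∈ ℝ^p with ‖κ‖_∞ ≤ 1, ⟨κ, β̂⟩ = ‖β̂‖₁, and (1/n)Uᵀ(Uβ̂ − y) + λκ = 0; (b) λ ≥ 2‖(1/n)Uᵀw‖_∞; and (c) there is a constant C > 0 with (1/n)‖Uθ‖₂² ≥ C‖θ‖₂². Then ‖θ‖₂ ≤ (3λ√s)/(2C) and ‖θ‖₁ ≤ 6λs/C. -/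

import Mathlib

open Matrix BigOperators Finset

/-!
Pairing the stationarity condition with the error `θ = β̂ - β*` gives
`(1/n)‖Uθ‖₂² = ⟨(1/n)Uᵀw, θ⟩ - λ⟨κ, θ⟩`. Hölder bounds the noise term by `(λ/2)‖θ‖₁`, and since
`κ` is a subgradient of `‖·‖₁` at `β̂` while `β*` vanishes off `S`, we have
`⟨κ, θ⟩ ≥ ‖β̂‖₁ - ‖β*‖₁ ≥ ‖θ_{Sᶜ}‖₁ - ‖θ_S‖₁`. Hence
`C‖θ‖₂² ≤ (λ/2)(3‖θ_S‖₁ - ‖θ_{Sᶜ}‖₁)`. Dropping the negative term and using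
`‖θ_S‖₁ ≤ √s ‖θ‖₂` gives the `ℓ²` bound; dropping the left-hand side puts `θ` in the cone
`‖θ_{Sᶜ}‖₁ ≤ 3‖θ_S‖₁`, on which the `ℓ¹` norm is at most `4√s` times the `ℓ²` norm.
-/

section Subgradient

variable {ι R : Type*} [Fintype ι]

theorem dotProduct_le_mul_sum_abs [CommRing R] [LinearOrder R] [IsStrictOrderedRing R]
    {a : ι → R} {b : R} (ha : ∀ j, |a j| ≤ b) (x : ι → R) :
    a ⬝ᵥ x ≤ b * ∑ j, |x j| := by
  rw [dotProduct, mul_sum]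
  refine sum_le_sum fun j _ ↦ ?_
  calc a j * x j ≤ |a j| * |x j| := (le_abs_self _).trans_eq (abs_mul _ _)
    _ ≤ b * |x j| := mul_le_mul_of_nonneg_right (ha j) (abs_nonneg _)

theorem sum_abs_sub_sum_abs_le_dotProduct_sub
    [CommRing R] [LinearOrder R] [IsStrictOrderedRing R] {κ z : ι → R}
    (hκ : ∀ j, |κ j| ≤ 1) (hκz : κ ⬝ᵥ z = ∑ j, |z j|) (x : ι → R) :
    ∑ j, |z j| - ∑ j, |x j| ≤ κ ⬝ᵥ (z - x) := by
  rw [dotProduct_sub, hκz]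
  gcongr
  simpa only [one_mul] using dotProduct_le_mul_sum_abs hκ x

theorem sum_compl_abs_sub_sum_abs_le [DecidableEq ι]
    [AddCommGroup R] [LinearOrder R] [IsOrderedAddMonoid R]
    {S : Finset ι} {x : ι → R} (hx : ∀ j ∉ S, x j = 0) (z : ι → R) :
    ∑ j ∈ Sᶜ, |(z - x) j| - ∑ j ∈ S, |(z - x) j| ≤ ∑ j, |z j| - ∑ j, |x j| := by
  have off_support : ∑ j ∈ Sᶜ, |(z - x) j| = ∑ j ∈ Sᶜ, (|z j| - |x j|) :=
    sum_congr rfl fun j hj ↦ by simp [hx j (mem_compl.mp hj)]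
  have on_support : -∑ j ∈ S, |(z - x) j| ≤ ∑ j ∈ S, (|z j| - |x j|) := by
    rw [← sum_neg_distrib]
    exact sum_le_sum fun j _ ↦ (abs_le.mp (abs_abs_sub_abs_le (z j) (x j))).1
  calc ∑ j ∈ Sᶜ, |(z - x) j| - ∑ j ∈ S, |(z - x) j|
      ≤ ∑ j ∈ Sᶜ, (|z j| - |x j|) + ∑ j ∈ S, (|z j| - |x j|) := by
        rw [sub_eq_add_neg, off_support]
        gcongr
    _ = ∑ j, |z j| - ∑ j, |x j| := by rw [sum_compl_add_sum, sum_sub_distrib]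

end Subgradient

section SparseVector

variable {ι : Type*} [Fintype ι] {S : Finset ι} {x : ι → ℝ}

theorem sum_abs_le_sqrt_card_mul_sqrt_sum_sq (S : Finset ι) (x : ι → ℝ) :
    ∑ j ∈ S, |x j| ≤ √(#S) * √(∑ j, x j ^ 2) := by
  rw [← Real.sqrt_mul (Nat.cast_nonneg _)]
  refine Real.le_sqrt_of_sq_le ?_
  calc (∑ j ∈ S, |x j|) ^ 2 ≤ #S * ∑ j ∈ S, |x j| ^ 2 := sq_sum_le_card_mul_sum_sq
    _ ≤ #S * ∑ j, x j ^ 2 := by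
      simp only [sq_abs]
      gcongr
      exact subset_univ S

theorem sqrt_sum_sq_le_of_mul_sum_sq_le_mul_sum_abs {a C : ℝ} (ha : 0 ≤ a) (hC : 0 < C)
    (h : C * ∑ j, x j ^ 2 ≤ a * ∑ j ∈ S, |x j|) :
    √(∑ j, x j ^ 2) ≤ a * √(#S) / C := by
  rw [le_div_iff₀' hC]
  rcases (Real.sqrt_nonneg (∑ j, x j ^ 2)).eq_or_lt with norm_zero | norm_pos
  · rw [← norm_zero, mul_zero]
    positivity
  · refine le_of_mul_le_mul_right ?_ norm_pos
    calc C * √(∑ j, x j ^ 2) * √(∑ j, x j ^ 2) = C * ∑ j, x j ^ 2 := by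
          rw [mul_assoc, Real.mul_self_sqrt (sum_nonneg fun _ _ ↦ sq_nonneg _)]
      _ ≤ a * (√(#S) * √(∑ j, x j ^ 2)) :=
          h.trans (mul_le_mul_of_nonneg_left (sum_abs_le_sqrt_card_mul_sqrt_sum_sq S x) ha)
      _ = a * √(#S) * √(∑ j, x j ^ 2) := (mul_assoc _ _ _).symm

theorem sum_abs_le_of_sum_compl_abs_le [DecidableEq ι] {k : ℝ} (hk : 0 ≤ 1 + k)
    (hcone : ∑ j ∈ Sᶜ, |x j| ≤ k * ∑ j ∈ S, |x j|) :
    ∑ j, |x j| ≤ (1 + k) * (√(#S) * √(∑ j, x j ^ 2)) :=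
  calc ∑ j, |x j| = ∑ j ∈ S, |x j| + ∑ j ∈ Sᶜ, |x j| := (sum_add_sum_compl S _).symm
    _ ≤ (1 + k) * ∑ j ∈ S, |x j| := by linarith
    _ ≤ (1 + k) * (√(#S) * √(∑ j, x j ^ 2)) :=
      mul_le_mul_of_nonneg_left (sum_abs_le_sqrt_card_mul_sqrt_sum_sq S x) hk

end SparseVector

section Lasso

variable {m ι : Type*} [Fintype m] [Fintype ι]

theorem mul_sum_sq_mulVec_sub_eq_of_stationary {R : Type*} [CommRing R] {U : Matrix m ι R}
    {βstar βhat g : ι → R} {w : m → R} {c : R}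
    (hstat : c • (Uᵀ *ᵥ (U *ᵥ βhat - (U *ᵥ βstar + w))) + g = 0) :
    c * ∑ i, (U *ᵥ (βhat - βstar)) i ^ 2 = (c • (Uᵀ *ᵥ w) - g) ⬝ᵥ (βhat - βstar) := by
  set θ := βhat - βstar with hθ
  have residual : U *ᵥ βhat - (U *ᵥ βstar + w) = U *ᵥ θ - w := by
    rw [hθ, mulVec_sub, sub_sub]
  have normal_eq : c • (Uᵀ *ᵥ (U *ᵥ θ)) = c • (Uᵀ *ᵥ w) - g := by
    rw [residual, mulVec_sub, smul_sub] at hstat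
    rw [← sub_eq_zero, ← hstat]
    abel
  calc c * ∑ i, (U *ᵥ θ) i ^ 2 = c * ((U *ᵥ θ) ⬝ᵥ (U *ᵥ θ)) := by simp only [dotProduct, sq]
    _ = (c • (Uᵀ *ᵥ (U *ᵥ θ))) ⬝ᵥ θ := by
      rw [dotProduct_mulVec, ← mulVec_transpose, smul_dotProduct, smul_eq_mul]
    _ = (c • (Uᵀ *ᵥ w) - g) ⬝ᵥ θ := by rw [normal_eq]

theorem lasso_basic_inequality [DecidableEq ι] {U : Matrix m ι ℝ} {βstar βhat κ : ι → ℝ}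
    {w : m → ℝ} {c lam : ℝ} {S : Finset ι} (hlam : 0 ≤ lam) (hsupp : ∀ j ∉ S, βstar j = 0)
    (hκ : ∀ j, |κ j| ≤ 1) (hκ_dot : κ ⬝ᵥ βhat = ∑ j, |βhat j|)
    (hKKT : c • (Uᵀ *ᵥ (U *ᵥ βhat - (U *ᵥ βstar + w))) + lam • κ = 0)
    (hnoise : ∀ j, |c * (Uᵀ *ᵥ w) j| ≤ lam / 2) :
    c * ∑ i, (U *ᵥ (βhat - βstar)) i ^ 2 ≤
      lam / 2 *
        (3 * ∑ j ∈ S, |(βhat - βstar) j| - ∑ j ∈ Sᶜ, |(βhat - βstar) j|) := by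
  set θ := βhat - βstar
  have noise_le : (c • (Uᵀ *ᵥ w)) ⬝ᵥ θ ≤ lam / 2 * (∑ j ∈ S, |θ j| + ∑ j ∈ Sᶜ, |θ j|) := by
    rw [sum_add_sum_compl]
    exact dotProduct_le_mul_sum_abs hnoise θ
  have le_penalty : ∑ j ∈ Sᶜ, |θ j| - ∑ j ∈ S, |θ j| ≤ κ ⬝ᵥ θ :=
    (sum_compl_abs_sub_sum_abs_le hsupp βhat).trans
      (sum_abs_sub_sum_abs_le_dotProduct_sub hκ hκ_dot βstar)
  calc c * ∑ i, (U *ᵥ θ) i ^ 2 = (c • (Uᵀ *ᵥ w)) ⬝ᵥ θ - lam * (κ ⬝ᵥ θ) := by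
        rw [mul_sum_sq_mulVec_sub_eq_of_stationary hKKT, sub_dotProduct, smul_dotProduct lam,
          smul_eq_mul]
    _ ≤ lam / 2 * (∑ j ∈ S, |θ j| + ∑ j ∈ Sᶜ, |θ j|)
        - lam * (∑ j ∈ Sᶜ, |θ j| - ∑ j ∈ S, |θ j|) := by gcongr
    _ = lam / 2 * (3 * ∑ j ∈ S, |θ j| - ∑ j ∈ Sᶜ, |θ j|) := by ring

theorem lasso_error_bounds_general {U : Matrix m ι ℝ} {βstar βhat κ : ι → ℝ}
    {w : m → ℝ} {c lam C : ℝ} {S : Finset ι} (hlam : 0 < lam) (hsupp : ∀ j ∉ S, βstar j = 0)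
    (hκ : ∀ j, |κ j| ≤ 1) (hκ_dot : κ ⬝ᵥ βhat = ∑ j, |βhat j|)
    (hKKT : c • (Uᵀ *ᵥ (U *ᵥ βhat - (U *ᵥ βstar + w))) + lam • κ = 0)
    (hnoise : ∀ j, |c * (Uᵀ *ᵥ w) j| ≤ lam / 2) (hC : 0 < C)
    (hRE : C * ∑ j, (βhat - βstar) j ^ 2 ≤ c * ∑ i, (U *ᵥ (βhat - βstar)) i ^ 2) :
    √(∑ j, (βhat - βstar) j ^ 2) ≤ 3 * lam * √(#S) / (2 * C) ∧
      ∑ j, |(βhat - βstar) j| ≤ 6 * lam * #S / C := by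
  classical
  have basic := hRE.trans (lasso_basic_inequality hlam.le hsupp hκ hκ_dot hKKT hnoise)
  set θ := βhat - βstar
  have l2_bound : √(∑ j, θ j ^ 2) ≤ 3 * lam * √(#S) / (2 * C) := by
    have off_nonneg : 0 ≤ lam / 2 * ∑ j ∈ Sᶜ, |θ j| := by positivity
    refine sqrt_sum_sq_le_of_mul_sum_sq_le_mul_sum_abs (by positivity) (by positivity) ?_
    linarith
  have cone : ∑ j ∈ Sᶜ, |θ j| ≤ 3 * ∑ j ∈ S, |θ j| := by
    have gap_nonneg : 0 ≤ lam / 2 * (3 * ∑ j ∈ S, |θ j| - ∑ j ∈ Sᶜ, |θ j|) :=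
      le_trans (by positivity) basic
    exact sub_nonneg.mp (nonneg_of_mul_nonneg_right gap_nonneg (half_pos hlam))
  refine ⟨l2_bound, ?_⟩
  calc ∑ j, |θ j| ≤ (1 + 3) * (√(#S) * √(∑ j, θ j ^ 2)) :=
        sum_abs_le_of_sum_compl_abs_le (by norm_num) cone
    _ ≤ (1 + 3) * (√(#S) * (3 * lam * √(#S) / (2 * C))) := by gcongr
    _ = 6 * lam * √(#S) ^ 2 / C := by ring
    _ = 6 * lam * #S / C := by rw [Real.sq_sqrt (Nat.cast_nonneg _)]

end Lasso

/-- Deterministic finite-sample core of Theorem 4: under the KKT condition,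
`λ ≥ 2‖(1/n)Uᵀw‖_∞`, and the restricted-eigenvalue lower bound
`(1/n)‖Uθ‖₂² ≥ C‖θ‖₂²`, the Lasso error satisfies
`‖θ‖₂ ≤ 3λ√s/(2C)` and `‖θ‖₁ ≤ 6λs/C`. -/
theorem lasso_error_bounds
    {n p : ℕ} (U : Matrix (Fin n) (Fin p) ℝ)
    (βstar : Fin p → ℝ) (w : Fin n → ℝ) (y : Fin n → ℝ)
    (hy : y = U *ᵥ βstar + w)
    (lam : ℝ) (hlam : 0 < lam)
    (S : Finset (Fin p)) (hsupp : ∀ j ∉ S, βstar j = 0)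
    (s : ℕ) (hs : s = S.card) (hs_pos : 1 ≤ s)
    (βhat : Fin p → ℝ) (θ : Fin p → ℝ) (hθ : θ = βhat - βstar)
    (κ : Fin p → ℝ) (hκ_sub : ∀ j, |κ j| ≤ 1)
    (hκ_dot : κ ⬝ᵥ βhat = ∑ j, |βhat j|)
    (hKKT : (n : ℝ)⁻¹ • (Uᵀ *ᵥ (U *ᵥ βhat - y)) + lam • κ = 0)
    (hlam_ge : 2 * (⨆ j, |(n : ℝ)⁻¹ * (Uᵀ *ᵥ w) j|) ≤ lam)
    (C : ℝ) (hC : 0 < C)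
    (hRE : (n : ℝ)⁻¹ * ∑ i, ((U *ᵥ θ) i) ^ 2 ≥ C * ∑ j, (θ j) ^ 2) :
    Real.sqrt (∑ j, (θ j) ^ 2) ≤ 3 * lam * Real.sqrt s / (2 * C) ∧
    (∑ j, |θ j|) ≤ 6 * lam * s / C := by
  subst hy hs hθ
  have noise_le (j : Fin p) : |(n : ℝ)⁻¹ * (Uᵀ *ᵥ w) j| ≤ lam / 2 := by
    linarith [le_ciSup (f := fun j ↦ |(n : ℝ)⁻¹ * (Uᵀ *ᵥ w) j|) (Set.finite_range _).bddAbove j]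
  exact lasso_error_bounds_general hlam hsupp hκ_sub hκ_dot hKKT noise_le hC hRE
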